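/- arXiv:1904.01919 — 2 statements merged into one kernel-verified Lean document; each statement's English description precedes it below -/
import Mathlib

section
/- Let g be holomorphic on the unit disc D. Then the Volterra operator T_g maps the Besov space B^1 into the Bloch space 𝓑 if and only if g ∈ 𝓑. -/
open MeasureTheory Metric Complex Real Filter Set

noncomputable section

/-- `f` is holomorphic on the open unit disc. -/
def HolOn (f : ℂ → ℂ) : Prop := DifferentiableOn ℂ f (Metric.ball (0:ℂ) 1)

/-- The normalized Lebesgue area measure on `ℂ` (so the unit disc has total mass 1). -/
def dA : Measure ℂ := (ENNReal.ofReal π)⁻¹ • volume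

/-- Bounded holomorphic functions on the unit disc. -/
def Hinf : Set (ℂ → ℂ) :=
  {f | HolOn f ∧ ∃ C : ℝ, ∀ z ∈ Metric.ball (0:ℂ) 1, ‖f z‖ ≤ C}

/-- The Bloch space. -/
def Bloch : Set (ℂ → ℂ) :=
  {f | HolOn f ∧ ∃ C : ℝ, ∀ z ∈ Metric.ball (0:ℂ) 1,
      (1 - ‖z‖ ^ 2) * ‖deriv f z‖ ≤ C}

/-- The little Bloch space: `(1-|z|²)|f'(z)| → 0` as `|z| → 1⁻`. -/
def littleBloch : Set (ℂ → ℂ) :=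
  {f | HolOn f ∧ ∀ ε : ℝ, 0 < ε → ∃ r : ℝ, r < 1 ∧ ∀ z ∈ Metric.ball (0:ℂ) 1,
      r < ‖z‖ → (1 - ‖z‖ ^ 2) * ‖deriv f z‖ < ε}

/-- The `α`-logarithmic Bloch space. -/
def BlochLog (α : ℝ) : Set (ℂ → ℂ) :=
  {f | HolOn f ∧ ∃ C : ℝ, ∀ z ∈ Metric.ball (0:ℂ) 1,
      (1 - ‖z‖ ^ 2) * (Real.log (2 / (1 - ‖z‖ ^ 2))) ^ α *
        ‖deriv f z‖ ≤ C}

/-- The Besov space `B¹`: holomorphic `f` with `∫_D |f''| dA < ∞`. -/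
def Besov1 : Set (ℂ → ℂ) :=
  {f | HolOn f ∧ ∫⁻ z in Metric.ball (0:ℂ) 1,
      ENNReal.ofReal (‖deriv (deriv f) z‖) ∂dA < ⊤}

/-- The Besov space `Bᵖ` (`1 < p < ∞`): `∫_D (1-|z|)^(p-2) |f'(z)|^p dA(z) < ∞`. -/
def Besov (p : ℝ) : Set (ℂ → ℂ) :=
  {f | HolOn f ∧ ∫⁻ z in Metric.ball (0:ℂ) 1,
      ENNReal.ofReal ((1 - ‖z‖) ^ (p - 2) * ‖deriv f z‖ ^ p) ∂dA < ⊤}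

open scoped Classical in
/-- The Besov space `Bᵖ` for all `1 ≤ p < ∞` (with the special definition at `p = 1`). -/
def BesovFull (p : ℝ) : Set (ℂ → ℂ) := if p = 1 then Besov1 else Besov p

/-- The Möbius transformation `φ_a(z) = (a-z)/(1 - conj a · z)`. -/
def phi (a z : ℂ) : ℂ := (a - z) / (1 - (starRingEnd ℂ) a * z)

/-- The space `Q_s`. -/
def Qs (s : ℝ) : Set (ℂ → ℂ) :=
  {f | HolOn f ∧ ⨆ a ∈ Metric.ball (0:ℂ) 1, ∫⁻ z in Metric.ball (0:ℂ) 1,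
      ENNReal.ofReal (‖deriv f z‖ ^ 2 *
        (1 - ‖phi a z‖ ^ 2) ^ s) ∂dA < ⊤}

/-- The space `Q_{s,log,α}`. -/
def QsLog (s α : ℝ) : Set (ℂ → ℂ) :=
  {f | HolOn f ∧ ⨆ a ∈ Metric.ball (0:ℂ) 1,
      (ENNReal.ofReal ((Real.log (2 / (1 - ‖a‖))) ^ (2 * α)) *
        ∫⁻ z in Metric.ball (0:ℂ) 1,
          ENNReal.ofReal (‖deriv f z‖ ^ 2 *
            (1 - ‖phi a z‖ ^ 2) ^ s) ∂dA) < ⊤}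

/-- The Volterra operator `T_g(f)(z) = ∫_0^z g'(ξ) f(ξ) dξ` (along the segment from 0 to z). -/
def Tg (g f : ℂ → ℂ) : ℂ → ℂ :=
  fun z => z * ∫ t in (0:ℝ)..1, deriv g ((t : ℂ) * z) * f ((t : ℂ) * z)

/-- The companion operator `I_g(f)(z) = ∫_0^z g(ξ) f'(ξ) dξ` (along the segment from 0 to z). -/
def Ig (g f : ℂ → ℂ) : ℂ → ℂ :=
  fun z => z * ∫ t in (0:ℝ)..1, g ((t : ℂ) * z) * deriv f ((t : ℂ) * z)

/-- The multiplication operator `M_g(f) = g · f`. -/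
def Mg (g f : ℂ → ℂ) : ℂ → ℂ := fun z => g z * f z

/-- `T` maps `X` into `Y`. -/
def MapsInto (T : (ℂ → ℂ) → (ℂ → ℂ)) (X Y : Set (ℂ → ℂ)) : Prop :=
  ∀ f ∈ X, T f ∈ Y

/-- The Hardy space `H^q`. -/
def Hardy (q : ℝ) : Set (ℂ → ℂ) :=
  {f | HolOn f ∧ ∃ C : ℝ, ∀ r : ℝ, 0 < r → r < 1 →
      (1 / (2 * π)) * ∫ t in (0:ℝ)..(2 * π),
        ‖f ((r : ℂ) * Complex.exp ((t : ℂ) * Complex.I))‖ ^ q ≤ C}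

/-- An inner function: bounded holomorphic with radial boundary values of modulus 1 a.e. -/
def IsInner (g : ℂ → ℂ) : Prop :=
  g ∈ Hinf ∧ ∀ᵐ t : ℝ ∂(volume.restrict (Set.Ioc (0:ℝ) (2 * π))),
    Filter.Tendsto (fun r : ℝ => ‖g ((r : ℂ) * Complex.exp ((t : ℂ) * Complex.I))‖)
      (nhdsWithin 1 (Set.Iio 1)) (nhds 1)

/-- `X` has the f-property (division by inner functions). -/
def FProperty (X : Set (ℂ → ℂ)) : Prop :=
  ∀ h ∈ X, ∀ g : ℂ → ℂ, IsInner g →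
    (fun z => h z / g z) ∈ Hardy 1 → (fun z => h z / g z) ∈ X

/-- The space of multipliers `M(X,Y)`. -/
def Mult (X Y : Set (ℂ → ℂ)) : Set (ℂ → ℂ) :=
  {g | HolOn g ∧ ∀ f ∈ X, (fun z => g z * f z) ∈ Y}

end

/-!
Since `(T_g f)' = g' f`, testing on `f = 1` shows that `g` is a Bloch function as soon as `T_g` maps
into `𝓑`; conversely, `T_g f ∈ 𝓑` for every Bloch function `g` and every bounded `f`, so everything
rests on the boundedness of the functions in `B¹`. There, the Taylor remainder
`f z - f 0 - z f'(0) = ∫₀¹ (1 - t) z² f''(tz) dt` is rewritten with `t = r²`, and `f''(r²z)` is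
bounded by the Cauchy formula on the circle `|ζ| = r`, whose distance to `r²z` is at least
`r (1 - r)`. The resulting factor `(1 - r)⁻¹` is absorbed by the weight `1 - r²`, and what is left,
`∫₀¹ M₁(r, f'') 2r dr`, is `∫ |f''| dA` in polar coordinates.
-/

variable {E : Type*} [NormedAddCommGroup E] [NormedSpace ℂ E]

section CircleAverage

open scoped ENNReal

/-- The mean of `u : ℂ → [0, ∞]` over the circle of centre `c` and radius `r`: the counterpart of
`Real.circleAverage` for the lower Lebesgue integral. For `u = ‖f ·‖ₑ` and `c = 0` it is the
integral mean `M₁(r, f)`. The angle runs over `(-π, π)` to match polar coordinates. -/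
noncomputable def lcircleAverage (u : ℂ → ℝ≥0∞) (c : ℂ) (r : ℝ) : ℝ≥0∞ :=
  (ENNReal.ofReal (2 * π))⁻¹ * ∫⁻ θ in Ioo (-π) π, u (circleMap c r θ)

lemma lcircleAverage_le_const_mul {u v : ℂ → ℝ≥0∞} {c : ℂ} {r : ℝ} {K : ℝ≥0∞} (hK : K ≠ ⊤)
    (huv : ∀ z ∈ sphere c |r|, u z ≤ K * v z) :
    lcircleAverage u c r ≤ K * lcircleAverage v c r := by
  have h : ∫⁻ θ in Ioo (-π) π, u (circleMap c r θ) ≤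
      K * ∫⁻ θ in Ioo (-π) π, v (circleMap c r θ) := by
    rw [← lintegral_const_mul' _ _ hK]
    exact lintegral_mono fun θ ↦ huv _ (circleMap_mem_sphere' c r θ)
  rw [lcircleAverage, lcircleAverage, mul_left_comm]
  gcongr

lemma enorm_circleAverage_le_lcircleAverage (f : ℂ → E) (c : ℂ) (r : ℝ) :
    ‖circleAverage f c r‖ₑ ≤ lcircleAverage (fun z ↦ ‖f z‖ₑ) c r := by
  have h : circleAverage f c r = (2 * π)⁻¹ • ∫ θ in Ioo (-π) π, f (circleMap c r θ) := by
    rw [circleAverage_eq_integral_add (-π),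
      intervalIntegral.integral_comp_add_right (fun θ ↦ f (circleMap c r θ)), zero_add,
      show 2 * π + -π = π by ring, intervalIntegral.integral_of_le (by linarith [pi_pos]),
      integral_Ioc_eq_integral_Ioo]
  rw [h, enorm_smul, Real.enorm_of_nonneg (by positivity),
    ENNReal.ofReal_inv_of_pos (by positivity), lcircleAverage]
  gcongr
  exact enorm_integral_le_lintegral_enorm _

lemma lintegral_ball_eq_lintegral_polar (u : ℂ → ℝ≥0∞) (c : ℂ) (R : ℝ) :
    ∫⁻ z in ball c R, u z =
      ∫⁻ p in Ioo 0 R ×ˢ Ioo (-π) π, ENNReal.ofReal p.1 * u (circleMap c p.1 p.2) := by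
  classical
  have indicator_polar : ∀ p ∈ polarCoord.target,
      ENNReal.ofReal p.1 • (ball c R).indicator u (c + Complex.polarCoord.symm p) =
        (Ioo 0 R ×ˢ Ioo (-π) π).indicator
          (fun p ↦ ENNReal.ofReal p.1 * u (circleMap c p.1 p.2)) p := by
    rintro ⟨r, θ⟩ ⟨hr : 0 < r, hθ : θ ∈ Ioo (-π) π⟩
    have polar_apply : c + Complex.polarCoord.symm (r, θ) = circleMap c r θ := by
      simp [circleMap, Complex.exp_mul_I]
    have mem_ball_iff : circleMap c r θ ∈ ball c R ↔ (r, θ) ∈ Ioo 0 R ×ˢ Ioo (-π) π := by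
      rw [mem_ball, circleMap_mem_sphere c hr.le θ, mem_prod, and_iff_left hθ, mem_Ioo,
        and_iff_right hr]
    simp only [polar_apply, indicator_apply, mem_ball_iff, smul_eq_mul, mul_ite, mul_zero]
  have inter_target : Ioo 0 R ×ˢ Ioo (-π) π ∩ polarCoord.target = Ioo 0 R ×ˢ Ioo (-π) π :=
    inter_eq_left.2 (prod_mono Ioo_subset_Ioi_self subset_rfl)
  calc ∫⁻ z in ball c R, u z
      = ∫⁻ z, (ball c R).indicator u (c + z) := by
        rw [← lintegral_indicator measurableSet_ball, lintegral_add_left_eq_self]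
    _ = ∫⁻ p in Ioo 0 R ×ˢ Ioo (-π) π, ENNReal.ofReal p.1 * u (circleMap c p.1 p.2) := by
        rw [← Complex.lintegral_comp_polarCoord_symm,
          setLIntegral_congr_fun polarCoord.open_target.measurableSet indicator_polar,
          setLIntegral_indicator (measurableSet_Ioo.prod measurableSet_Ioo), inter_target]

lemma lintegral_ball_eq_lintegral_lcircleAverage {u : ℂ → ℝ≥0∞} (hu : Measurable u) (c : ℂ)
    (R : ℝ) :
    ∫⁻ z in ball c R, u z =
      ∫⁻ r in Ioo 0 R, ENNReal.ofReal (2 * π * r) * lcircleAverage u c r := by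
  have h2π : ENNReal.ofReal (2 * π) ≠ 0 := by simp [pi_pos]
  have measurable_polar : Measurable fun p : ℝ × ℝ ↦
      ENNReal.ofReal p.1 * u (circleMap c p.1 p.2) := by
    unfold circleMap
    fun_prop
  rw [lintegral_ball_eq_lintegral_polar, Measure.volume_eq_prod, ← Measure.prod_restrict,
    lintegral_prod _ measurable_polar.aemeasurable]
  refine lintegral_congr fun r ↦ ?_
  rw [lintegral_const_mul' _ _ ENNReal.ofReal_ne_top, lcircleAverage, mul_comm (2 * π),
    ENNReal.ofReal_mul' (by positivity), mul_assoc,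
    ENNReal.mul_inv_cancel_left h2π ENNReal.ofReal_ne_top]

lemma lintegral_ball_dA_eq_lintegral_lcircleAverage {u : ℂ → ℝ≥0∞} (hu : Measurable u) (c : ℂ)
    (R : ℝ) :
    ∫⁻ z in ball c R, u z ∂dA =
      ∫⁻ r in Ioo 0 R, ENNReal.ofReal (2 * r) * lcircleAverage u c r := by
  rw [dA, Measure.restrict_smul, lintegral_smul_measure, smul_eq_mul,
    lintegral_ball_eq_lintegral_lcircleAverage hu, ← lintegral_const_mul' _ _ (by simp [pi_pos])]
  refine lintegral_congr fun r ↦ ?_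
  rw [← mul_assoc, ← ENNReal.ofReal_inv_of_pos pi_pos, ← ENNReal.ofReal_mul (by positivity)]
  congr 2
  field_simp

end CircleAverage

lemma integral_unitInterval_comp_sq {F : Type*} [NormedAddCommGroup F] [NormedSpace ℝ F]
    (φ : ℝ → F) :
    ∫ r in (0 : ℝ)..1, (2 * r) • φ (r ^ 2) = ∫ t in (0 : ℝ)..1, φ t := by
  have hderiv (r : ℝ) : HasDerivAt (fun r : ℝ ↦ r ^ 2) (2 * r) r := by
    simpa using hasDerivAt_pow 2 r
  have hsubst := intervalIntegral.integral_deriv_smul_comp_of_deriv_nonneg (g := φ)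
    (a := 0) (b := 1) (continuousOn_pow 2) (fun r _ ↦ hderiv r)
    (fun r hr ↦ by simpa using hr.1.le)
  simpa only [Function.comp_apply, zero_pow two_ne_zero, one_pow] using hsubst

section Holomorphic

variable [CompleteSpace E]

lemma enorm_le_mul_lcircleAverage {f : ℂ → E} {c w : ℂ} {r : ℝ} (hf : DiffContOnCl ℂ f (ball c r))
    (hw : w ∈ ball c r) :
    ‖f w‖ₑ ≤ ENNReal.ofReal (r / (r - dist w c)) * lcircleAverage (fun z ↦ ‖f z‖ₑ) c r := by
  have hr : |r| = r := abs_of_pos (pos_of_mem_ball hw)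
  have kernel_le : ∀ z ∈ sphere c |r|, ‖((z - c) / (z - w)) • f z‖ₑ ≤
      ENNReal.ofReal (r / (r - dist w c)) * ‖f z‖ₑ := by
    intro z hz
    have hzc : dist z c = r := hr ▸ hz
    have hd : 0 < r - dist w c := sub_pos.2 hw
    rw [enorm_smul, ← ofReal_norm, norm_div, ← dist_eq_norm, ← dist_eq_norm, hzc]
    have hdz : r - dist w c ≤ dist z w := by linarith [dist_triangle z w c]
    have hr0 : 0 ≤ r := by linarith [dist_nonneg (x := w) (y := c)]
    gcongr
  rw [← hr] at hf hw
  calc ‖f w‖ₑ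
      = ‖circleAverage (fun z ↦ ((z - c) / (z - w)) • f z) c r‖ₑ := by
        rw [hf.circleAverage_smul_div hw]
    _ ≤ lcircleAverage (fun z ↦ ‖((z - c) / (z - w)) • f z‖ₑ) c r :=
        enorm_circleAverage_le_lcircleAverage _ _ _
    _ ≤ ENNReal.ofReal (r / (r - dist w c)) * lcircleAverage (fun z ↦ ‖f z‖ₑ) c r :=
        lcircleAverage_le_const_mul ENNReal.ofReal_ne_top kernel_le

lemma sub_sub_smul_deriv_eq_integral {f : ℂ → E} {U : Set ℂ} {c z : ℂ} (hU : IsOpen U)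
    (hf : DifferentiableOn ℂ f U) (hz : ∀ t ∈ Icc (0 : ℝ) 1, c + t * z ∈ U) :
    f (c + z) - f c - z • deriv f c =
      ∫ t in (0 : ℝ)..1, ((1 - t) * z ^ 2 : ℂ) • deriv (deriv f) (c + t * z) := by
  have hf' : DifferentiableOn ℂ (deriv f) U := hf.deriv hU
  rw [← uIcc_of_le zero_le_one] at hz
  have hasDerivAt_partial : ∀ t ∈ uIcc (0 : ℝ) 1,
      HasDerivAt (fun t : ℝ ↦ f (c + t * z) + ((1 - t) * z : ℂ) • deriv f (c + t * z))
        (((1 - t) * z ^ 2 : ℂ) • deriv (deriv f) (c + t * z)) t := by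
    intro t ht
    have hline : HasDerivAt (fun s : ℝ ↦ c + s * z) z t := by
      simpa using (((hasDerivAt_id (t : ℂ)).mul_const z).const_add c).comp_ofReal
    have hweight : HasDerivAt (fun s : ℝ ↦ (1 - s : ℂ) * z) (-z) t := by
      simpa using (((hasDerivAt_id (t : ℂ)).const_sub 1).mul_const z).comp_ofReal
    have hcomp {h : ℂ → E} (hh : DifferentiableOn ℂ h U) :
        HasDerivAt (fun s : ℝ ↦ h (c + s * z)) (z • deriv h (c + t * z)) t :=
      (hh.differentiableAt (hU.mem_nhds (hz t ht))).hasDerivAt.scomp t hline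
    refine ((hcomp hf).add (hweight.smul (hcomp hf'))).congr_deriv ?_
    module
  have continuousOn_remainder : ContinuousOn
      (fun t : ℝ ↦ ((1 - t) * z ^ 2 : ℂ) • deriv (deriv f) (c + t * z)) (uIcc 0 1) :=
    ContinuousOn.smul (by fun_prop) ((hf'.deriv hU).continuousOn.comp (by fun_prop) hz)
  rw [intervalIntegral.integral_eq_sub_of_hasDerivAt hasDerivAt_partial
    continuousOn_remainder.intervalIntegrable]
  simp only [ofReal_one, ofReal_zero, one_mul, zero_mul, sub_self, sub_zero, zero_smul, add_zero]
  abel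

lemma hasDerivAt_smul_integral_segment {h : ℂ → E} {R : ℝ} (hh : DifferentiableOn ℂ h (ball 0 R))
    {z : ℂ} (hz : z ∈ ball 0 R) :
    HasDerivAt (fun w ↦ w • ∫ t in (0 : ℝ)..1, h (t * w)) (h z) z := by
  obtain ⟨F, hF⟩ := hh.isExactOn_ball
  have eqOn_primitive : ∀ w ∈ ball (0 : ℂ) R, w • ∫ t in (0 : ℝ)..1, h (t * w) = F w - F 0 := by
    intro w hw
    have hmem : ∀ t ∈ Icc (0 : ℝ) 1, 0 + t • w ∈ ball (0 : ℂ) R := fun t ht ↦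
      ((convex_ball 0 R).starConvex (mem_ball_self (pos_of_mem_ball hw))).add_smul_mem
        (by simpa using hw) ht.1 ht.2
    simpa using intervalIntegral.integral_unitInterval_deriv_eq_sub
      (hh.continuousOn.comp (by fun_prop) hmem) (fun t ht ↦ hF _ (hmem t ht))
  exact ((hF z hz).sub_const (F 0)).congr_of_eventuallyEq
    (eventuallyEq_of_mem (isOpen_ball.mem_nhds hz) eqOn_primitive)

lemma enorm_le_mul_lcircleAverage_sq {h : ℂ → E} (hh : DifferentiableOn ℂ h (ball 0 1)) {z : ℂ}
    (hz : z ∈ ball 0 1) {r : ℝ} (hr : r ∈ Ioo (0 : ℝ) 1) :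
    ‖h (r ^ 2 * z)‖ₑ ≤ ENNReal.ofReal (1 - r)⁻¹ * lcircleAverage (fun w ↦ ‖h w‖ₑ) 0 r := by
  obtain ⟨hr0, hr1⟩ := hr
  have hdist : dist (r ^ 2 * z) 0 ≤ r ^ 2 := by
    simpa using mul_le_of_le_one_right (sq_nonneg r) (mem_ball_zero_iff.1 hz).le
  have hgap : r * (1 - r) ≤ r - dist (r ^ 2 * z) 0 := by linarith
  have hgap_pos : 0 < r * (1 - r) := mul_pos hr0 (sub_pos.2 hr1)
  have hfactor : r / (r - dist (r ^ 2 * z) 0) ≤ (1 - r)⁻¹ := by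
    calc r / (r - dist (r ^ 2 * z) 0) ≤ r / (r * (1 - r)) := by gcongr
      _ = (1 - r)⁻¹ := by rw [div_mul_cancel_left₀ hr0.ne']
  have hcl : DiffContOnCl ℂ h (ball 0 r) :=
    (hh.mono (closedBall_subset_ball hr1)).diffContOnCl_ball subset_rfl
  calc ‖h (r ^ 2 * z)‖ₑ
      ≤ ENNReal.ofReal (r / (r - dist (r ^ 2 * z) 0)) * lcircleAverage (fun w ↦ ‖h w‖ₑ) 0 r :=
        enorm_le_mul_lcircleAverage hcl (mem_ball.2 (by linarith))
    _ ≤ ENNReal.ofReal (1 - r)⁻¹ * lcircleAverage (fun w ↦ ‖h w‖ₑ) 0 r := by gcongr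

lemma enorm_remainder_integrand_le {h : ℂ → E} (hh : DifferentiableOn ℂ h (ball 0 1)) {z : ℂ}
    (hz : z ∈ ball 0 1) {r : ℝ} (hr : r ∈ Ioo (0 : ℝ) 1) :
    ‖((1 - r ^ 2) * z ^ 2 : ℂ) • h (r ^ 2 * z)‖ₑ ≤ 2 * lcircleAverage (fun w ↦ ‖h w‖ₑ) 0 r := by
  have hr1 : 0 < 1 - r := sub_pos.2 hr.2
  have hweight : ‖((1 - r ^ 2) * z ^ 2 : ℂ)‖ ≤ 1 - r ^ 2 := by
    have hz1 : ‖z‖ ^ 2 ≤ 1 := pow_le_one₀ (norm_nonneg z) (mem_ball_zero_iff.1 hz).le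
    have hr2 : 0 ≤ 1 - r ^ 2 := by nlinarith [hr.1]
    rw [norm_mul, norm_pow, ← ofReal_one, ← ofReal_pow, ← ofReal_sub, norm_real,
      Real.norm_of_nonneg hr2]
    exact mul_le_of_le_one_right hr2 hz1
  have hcancel : (1 - r ^ 2) * (1 - r)⁻¹ ≤ 2 := by
    rw [← div_eq_mul_inv, div_le_iff₀ hr1]
    nlinarith [hr.1]
  calc ‖((1 - r ^ 2) * z ^ 2 : ℂ) • h (r ^ 2 * z)‖ₑ
      ≤ ENNReal.ofReal (1 - r ^ 2) *
          (ENNReal.ofReal (1 - r)⁻¹ * lcircleAverage (fun w ↦ ‖h w‖ₑ) 0 r) := by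
        rw [enorm_smul, ← ofReal_norm (_ * _)]
        gcongr
        exact enorm_le_mul_lcircleAverage_sq hh hz hr
    _ = ENNReal.ofReal ((1 - r ^ 2) * (1 - r)⁻¹) * lcircleAverage (fun w ↦ ‖h w‖ₑ) 0 r := by
        rw [ENNReal.ofReal_mul' (inv_nonneg.2 hr1.le), mul_assoc]
    _ ≤ 2 * lcircleAverage (fun w ↦ ‖h w‖ₑ) 0 r := by
        gcongr
        exact ENNReal.ofReal_le_of_le_toReal (by simpa using hcancel)

theorem enorm_sub_sub_smul_deriv_le {f : ℂ → E} (hf : DifferentiableOn ℂ f (ball 0 1)) {z : ℂ}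
    (hz : z ∈ ball 0 1) :
    ‖f z - f 0 - z • deriv f 0‖ₑ ≤ 2 * ∫⁻ w in ball 0 1, ‖deriv (deriv f) w‖ₑ ∂dA := by
  have hf'' : DifferentiableOn ℂ (deriv (deriv f)) (ball 0 1) :=
    (hf.deriv isOpen_ball).deriv isOpen_ball
  have hseg : ∀ t ∈ Icc (0 : ℝ) 1, 0 + t * z ∈ ball (0 : ℂ) 1 := fun t ht ↦ by
    simpa using ((convex_ball (0 : ℂ) 1).starConvex (mem_ball_self one_pos)).smul_mem hz ht.1 ht.2
  have remainder_eq : f z - f 0 - z • deriv f 0 = ∫ r in (0 : ℝ)..1,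
      (2 * r) • ((1 - r ^ 2) * z ^ 2 : ℂ) • deriv (deriv f) (r ^ 2 * z) := by
    have htaylor := sub_sub_smul_deriv_eq_integral isOpen_ball hf hseg
    rw [← integral_unitInterval_comp_sq] at htaylor
    simpa only [zero_add, ofReal_pow] using htaylor
  calc ‖f z - f 0 - z • deriv f 0‖ₑ
      ≤ ∫⁻ r in Ioo (0 : ℝ) 1,
          ‖(2 * r) • ((1 - r ^ 2) * z ^ 2 : ℂ) • deriv (deriv f) (r ^ 2 * z)‖ₑ := by
        rw [remainder_eq, intervalIntegral.integral_of_le zero_le_one,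
          integral_Ioc_eq_integral_Ioo]
        exact enorm_integral_le_lintegral_enorm _
    _ ≤ ∫⁻ r in Ioo (0 : ℝ) 1,
          2 * (ENNReal.ofReal (2 * r) * lcircleAverage (fun w ↦ ‖deriv (deriv f) w‖ₑ) 0 r) := by
        refine setLIntegral_mono' measurableSet_Ioo fun r hr ↦ ?_
        have hr0 : 0 ≤ 2 * r := by linarith [hr.1]
        rw [enorm_smul, Real.enorm_of_nonneg hr0, mul_left_comm]
        gcongr
        exact enorm_remainder_integrand_le hf'' hz hr
    _ = 2 * ∫⁻ w in ball 0 1, ‖deriv (deriv f) w‖ₑ ∂dA := by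
        rw [lintegral_const_mul' _ _ ENNReal.ofNat_ne_top,
          lintegral_ball_dA_eq_lintegral_lcircleAverage (stronglyMeasurable_deriv (deriv f)).enorm]

end Holomorphic

section Spaces

theorem Besov1_subset_Hinf : Besov1 ⊆ Hinf := by
  rintro f ⟨hf, hint⟩
  simp only [ofReal_norm] at hint
  set N := 2 * ∫⁻ w in ball (0 : ℂ) 1, ‖deriv (deriv f) w‖ₑ ∂dA
  have hN_top : N ≠ ⊤ := ENNReal.mul_ne_top ENNReal.ofNat_ne_top hint.ne
  refine ⟨hf, N.toReal + ‖f 0‖ + ‖deriv f 0‖, fun z hz ↦ ?_⟩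
  have hremainder : ‖f z - f 0 - z * deriv f 0‖ ≤ N.toReal := by
    simpa using ENNReal.toReal_mono hN_top (enorm_sub_sub_smul_deriv_le hf hz)
  have hlinear : ‖z * deriv f 0‖ ≤ ‖deriv f 0‖ := by
    rw [norm_mul]
    exact mul_le_of_le_one_left (norm_nonneg _) (mem_ball_zero_iff.1 hz).le
  calc ‖f z‖ = ‖f z - f 0 - z * deriv f 0 + f 0 + z * deriv f 0‖ := by ring_nf
    _ ≤ ‖f z - f 0 - z * deriv f 0‖ + ‖f 0‖ + ‖z * deriv f 0‖ := norm_add₃_le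
    _ ≤ N.toReal + ‖f 0‖ + ‖deriv f 0‖ := by gcongr

lemma const_mem_Besov1 (c : ℂ) : (fun _ ↦ c) ∈ Besov1 :=
  ⟨differentiableOn_const c, by simp⟩

variable {g f : ℂ → ℂ}

lemma hasDerivAt_Tg (hg : HolOn g) (hf : HolOn f) {z : ℂ} (hz : z ∈ ball 0 1) :
    HasDerivAt (Tg g f) (deriv g z * f z) z :=
  hasDerivAt_smul_integral_segment ((DifferentiableOn.deriv hg isOpen_ball).mul hf) hz

lemma Tg_mem_Bloch (hg : g ∈ Bloch) (hf : f ∈ Hinf) : Tg g f ∈ Bloch := by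
  obtain ⟨hgol, C, hC⟩ := hg
  obtain ⟨hfol, M, hM⟩ := hf
  refine ⟨fun z hz ↦ (hasDerivAt_Tg hgol hfol hz).differentiableAt.differentiableWithinAt,
    C * M, fun z hz ↦ ?_⟩
  have hweight : 0 ≤ 1 - ‖z‖ ^ 2 :=
    sub_nonneg.2 (pow_le_one₀ (norm_nonneg z) (mem_ball_zero_iff.1 hz).le)
  have hC0 : 0 ≤ C := (mul_nonneg hweight (norm_nonneg _)).trans (hC z hz)
  rw [(hasDerivAt_Tg hgol hfol hz).deriv, norm_mul, ← mul_assoc]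
  exact mul_le_mul (hC z hz) (hM z hz) (norm_nonneg _) hC0

lemma mem_Bloch_of_Tg_one_mem_Bloch (hg : HolOn g) (h : Tg g (fun _ ↦ 1) ∈ Bloch) :
    g ∈ Bloch := by
  obtain ⟨-, C, hC⟩ := h
  refine ⟨hg, C, fun z hz ↦ ?_⟩
  have hderiv : deriv (Tg g fun _ ↦ 1) z = deriv g z := by
    simpa using (hasDerivAt_Tg hg (differentiableOn_const 1) hz).deriv
  exact hderiv ▸ hC z hz

theorem mapsInto_Tg_Bloch_iff {X : Set (ℂ → ℂ)} (hX_one : (fun _ ↦ 1) ∈ X) (hX : X ⊆ Hinf)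
    (hg : HolOn g) : MapsInto (Tg g) X Bloch ↔ g ∈ Bloch :=
  ⟨fun h ↦ mem_Bloch_of_Tg_one_mem_Bloch hg (h _ hX_one), fun h _ hf ↦ Tg_mem_Bloch h (hX hf)⟩

end Spaces

/-- For `g` holomorphic on the unit disc, `T_g` maps `B¹` into the Bloch
space iff `g` is a Bloch function. -/
theorem stmt1 (g : ℂ → ℂ) (hg : HolOn g) :
    MapsInto (Tg g) Besov1 Bloch ↔ g ∈ Bloch :=
  mapsInto_Tg_Bloch_iff (const_mem_Besov1 1) Besov1_subset_Hinf hg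
end

section
/- Suppose 1 < p < ∞ and let g be holomorphic on the unit disc D. Then the operator I_g maps the Besov space B^p into the Bloch space 𝓑 if and only if g ∈ H^∞. -/
open MeasureTheory Metric Complex Real Filter Set

/-!
Since `(I_g f)' = g f'`, a bounded `g` makes `I_g` preserve the Bloch space, and `B^p ⊆ 𝓑` by the
sub-mean value property of `|f'|^p` on the disc of radius `(1 - |z|) / 2` about `z`.

Conversely, the Möbius maps `φ_a` have uniformly bounded `B^p` seminorms: by the Schwarz–Pick
identity `1 - |φ_a|² = (1 - |z|²) |φ_a'|` and the substitution `w = φ_a(z)`, these are comparable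
to `∫_D (1 - |w|)^(p-2) dA(w)`, which is finite for `p > 1`. Hence `∑ c_n φ_{a_n} ∈ B^p` for every
`c ∈ ℓ¹` and every sequence `a_n` in `D`. If `I_g` maps `B^p` into `𝓑`, then the functionals
`c ↦ (1 - |z|²) g(z) ∑ c_n φ_{a_n}'(z)` on `ℓ¹`, indexed by `z ∈ D`, are pointwise bounded, hence
uniformly bounded by Banach–Steinhaus. Their `n`-th coefficient at `z = a_n` is `g(a_n)` up to
sign, so `g` is bounded along every sequence in `D`.
-/

open scoped ENNReal

section HolomorphicMaps

variable {E : Type*} [NormedAddCommGroup E] [NormedSpace ℂ E] [CompleteSpace E]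

theorem enorm_le_lintegral_circleMap {h : ℂ → E} {c : ℂ} {R : ℝ}
    (hh : DiffContOnCl ℂ h (ball c |R|)) :
    ENNReal.ofReal (2 * π) * ‖h c‖ₑ ≤ ∫⁻ θ in Ioc 0 (2 * π), ‖h (circleMap c R θ)‖ₑ := by
  have hmean : (2 * π) • h c = ∫ θ in (0 : ℝ)..2 * π, h (circleMap c R θ) := by
    rw [← hh.circleAverage, Real.circleAverage_def, smul_inv_smul₀ Real.two_pi_pos.ne']
  calc ENNReal.ofReal (2 * π) * ‖h c‖ₑ = ‖(2 * π) • h c‖ₑ := by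
        rw [enorm_smul, Real.enorm_eq_ofReal Real.two_pi_pos.le]
    _ ≤ _ := by
        rw [hmean, intervalIntegral.integral_of_le Real.two_pi_pos.le]
        exact enorm_integral_le_lintegral_enorm _

theorem enorm_le_lintegral_circleMap_mul {h : ℂ → E} {R : ℝ} (hh : DifferentiableOn ℂ h (ball 0 R))
    {w : ℂ} (hw : w ∈ ball 0 R) :
    ENNReal.ofReal (2 * π) * ‖h 0‖ₑ ≤ ∫⁻ θ in Ioc 0 (2 * π), ‖h (circleMap 0 1 θ * w)‖ₑ := by
  have hball : MapsTo (· * w) (closedBall 0 1) (ball 0 R) := fun u hu => by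
    rw [mem_ball_zero_iff] at hw ⊢
    rw [mem_closedBall_zero_iff] at hu
    exact (norm_mul_le u w).trans_lt ((mul_le_of_le_one_left (norm_nonneg w) hu).trans_lt hw)
  have hd : DiffContOnCl ℂ (fun u => h (u * w)) (ball 0 |1|) := by
    rw [abs_one]
    exact (hh.comp (differentiableOn_id.mul_const w) hball).diffContOnCl_ball Subset.rfl
  simpa only [zero_mul] using enorm_le_lintegral_circleMap hd

theorem lintegral_comp_mul_left_of_norm_eq_one {u : ℂ} (hu : ‖u‖ = 1) (F : ℂ → ℝ≥0∞) :
    ∫⁻ w, F (u * w) = ∫⁻ w, F w :=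
  (rotation ⟨u, mem_sphere_zero_iff_norm.2 hu⟩).measurePreserving.lintegral_comp_emb
    (rotation _).toHomeomorph.measurableEmbedding F

theorem volume_ball_zero_mul_enorm_le_setLIntegral {h : ℂ → E} {R : ℝ}
    (hh : DifferentiableOn ℂ h (ball 0 R)) :
    volume (ball (0 : ℂ) R) * ‖h 0‖ₑ ≤ ∫⁻ w in ball 0 R, ‖h w‖ₑ := by
  let F : ℂ → ℝ≥0∞ := (ball 0 R).indicator fun w => ‖h w‖ₑ
  have hF : Measurable F := by
    classical
    rw [show F = (ball 0 R).piecewise (fun w => ‖h w‖ₑ) 0 from (piecewise_eq_indicator ..).symm]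
    exact hh.continuousOn.enorm.measurable_piecewise continuousOn_const measurableSet_ball
  have hcircle : ∀ w ∈ ball (0 : ℂ) R,
      ENNReal.ofReal (2 * π) * ‖h 0‖ₑ ≤ ∫⁻ θ in Ioc 0 (2 * π), F (circleMap 0 1 θ * w) := by
    intro w hw
    refine (enorm_le_lintegral_circleMap_mul hh hw).trans_eq (lintegral_congr fun θ => ?_)
    have hmem : circleMap 0 1 θ * w ∈ ball 0 R := by simpa using hw
    exact (indicator_of_mem hmem (‖h ·‖ₑ)).symm
  have hpi : ENNReal.ofReal (2 * π) ≠ 0 := by simp [Real.pi_pos]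
  rw [← ENNReal.mul_le_mul_iff_right hpi ENNReal.ofReal_ne_top]
  calc ENNReal.ofReal (2 * π) * (volume (ball (0 : ℂ) R) * ‖h 0‖ₑ)
      = ∫⁻ _ in ball (0 : ℂ) R, ENNReal.ofReal (2 * π) * ‖h 0‖ₑ := by
        rw [setLIntegral_const]
        ring
    _ ≤ ∫⁻ w, ∫⁻ θ in Ioc 0 (2 * π), F (circleMap 0 1 θ * w) :=
        (setLIntegral_mono' measurableSet_ball hcircle).trans (setLIntegral_le_lintegral _ _)
    _ = ∫⁻ θ in Ioc 0 (2 * π), ∫⁻ w, F (circleMap 0 1 θ * w) :=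
        lintegral_lintegral_swap (by fun_prop)
    _ = ENNReal.ofReal (2 * π) * ∫⁻ w in ball 0 R, ‖h w‖ₑ := by
        simp_rw [lintegral_comp_mul_left_of_norm_eq_one ((norm_circleMap_zero 1 _).trans abs_one),
          F, lintegral_indicator measurableSet_ball]
        rw [setLIntegral_const, Real.volume_Ioc, sub_zero, mul_comm]

theorem volume_ball_mul_enorm_le_setLIntegral {h : ℂ → E} {c : ℂ} {R : ℝ}
    (hh : DifferentiableOn ℂ h (ball c R)) :
    volume (ball c R) * ‖h c‖ₑ ≤ ∫⁻ w in ball c R, ‖h w‖ₑ := by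
  have hpre : (c + ·) ⁻¹' ball c R = ball 0 R := by simp
  have hd : DifferentiableOn ℂ (fun w => h (c + w)) (ball 0 R) :=
    hh.comp (differentiableOn_id.const_add c) hpre.ge
  have hmp := measurePreserving_add_left (volume : Measure ℂ) c
  rw [← hmp.setLIntegral_comp_preimage_emb (measurableEmbedding_addLeft c),
    ← hmp.measure_preimage_emb (measurableEmbedding_addLeft c), hpre]
  simpa only [add_zero] using volume_ball_zero_mul_enorm_le_setLIntegral hd

theorem volume_ball_mul_enorm_rpow_le_setLIntegral {h : ℂ → E} {c : ℂ} {R p : ℝ} (hp : 1 ≤ p)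
    (hh : DifferentiableOn ℂ h (ball c R)) :
    volume (ball c R) * ‖h c‖ₑ ^ p ≤ ∫⁻ w in ball c R, ‖h w‖ₑ ^ p := by
  have hp0 : 0 < p := by linarith
  set V := volume (ball c R)
  obtain hV | hV := eq_or_ne V 0
  · simp [hV]
  have hV' : V ≠ ∞ := measure_ball_lt_top.ne
  have hmeas : AEStronglyMeasurable h (volume.restrict (ball c R)) :=
    hh.continuousOn.aestronglyMeasurable measurableSet_ball
  have hmean : V * ‖h c‖ₑ ≤ (∫⁻ w in ball c R, ‖h w‖ₑ ^ p) ^ (1 / p) * V ^ (1 - 1 / p) := by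
    have hHolder := eLpNorm'_le_eLpNorm'_mul_rpow_measure_univ zero_lt_one hp hmeas
    simp only [eLpNorm', ENNReal.rpow_one, div_one, Measure.restrict_apply_univ] at hHolder
    exact (volume_ball_mul_enorm_le_setLIntegral hh).trans hHolder
  have hpow := ENNReal.rpow_le_rpow hmean hp0.le
  rw [ENNReal.mul_rpow_of_nonneg _ _ hp0.le, ENNReal.mul_rpow_of_nonneg _ _ hp0.le,
    ← ENNReal.rpow_mul, ← ENNReal.rpow_mul, one_div_mul_cancel hp0.ne', ENNReal.rpow_one,
    sub_mul, one_mul, one_div_mul_cancel hp0.ne'] at hpow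
  have hV_split : V ^ p = V ^ (p - 1) * V := by
    simpa using ENNReal.rpow_add (p - 1) 1 hV hV'
  rw [hV_split, mul_assoc, mul_comm (∫⁻ w in ball c R, _)] at hpow
  have hV_pos : V ^ (p - 1) ≠ 0 := (ENNReal.rpow_pos (pos_iff_ne_zero.2 hV) hV').ne'
  exact (ENNReal.mul_le_mul_iff_right hV_pos
    (ENNReal.rpow_ne_top_of_nonneg (by linarith) hV')).1 hpow

theorem hasDerivAt_smul_intervalIntegral {h : ℂ → E} {R : ℝ} (hh : DifferentiableOn ℂ h (ball 0 R))
    {z : ℂ} (hz : z ∈ ball 0 R) :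
    HasDerivAt (fun w => w • ∫ t in (0 : ℝ)..1, h (t * w)) (h z) z := by
  obtain ⟨H, hH0, hH⟩ := hh.isExactOn_ball.with_val_at 0 0
  have hprim : ∀ w ∈ ball 0 R, w • ∫ t in (0 : ℝ)..1, h (t * w) = H w := fun w hw => by
    have hmem : ∀ t ∈ uIcc (0 : ℝ) 1, t * w ∈ ball 0 R := fun t ht => by
      rw [uIcc_of_le zero_le_one] at ht
      rw [mem_ball_zero_iff] at hw ⊢
      rw [norm_mul, Complex.norm_of_nonneg ht.1]
      exact (mul_le_of_le_one_left (norm_nonneg w) ht.2).trans_lt hw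
    have hray (t : ℝ) : HasDerivAt (fun t : ℝ => (t * w : ℂ)) w t := by
      simpa using (hasDerivAt_id t).ofReal_comp.mul_const w
    have hderiv : ∀ t ∈ uIcc (0 : ℝ) 1, HasDerivAt (fun t : ℝ => H (t * w)) (w • h (t * w)) t :=
      fun t ht => (hH _ (hmem t ht)).scomp t (hray t)
    have hcont : ContinuousOn (fun t : ℝ => w • h (t * w)) (uIcc 0 1) :=
      (hh.continuousOn.comp (f := fun t : ℝ => t * w) (by fun_prop) hmem).const_smul w
    rw [← intervalIntegral.integral_smul,
      intervalIntegral.integral_eq_sub_of_hasDerivAt hderiv hcont.intervalIntegrable]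
    simp [hH0]
  refine (hH z hz).congr_of_eventuallyEq ?_
  filter_upwards [isOpen_ball.mem_nhds hz] with w hw using hprim w hw

theorem lintegral_image_eq_lintegral_enorm_deriv_sq_mul {f f' : ℂ → ℂ} {s : Set ℂ}
    (hs : MeasurableSet s) (hf : ∀ z ∈ s, HasDerivWithinAt f (f' z) s z) (hinj : InjOn f s)
    (F : ℂ → ℝ≥0∞) : ∫⁻ w in f '' s, F w = ∫⁻ z in s, ‖f' z‖ₑ ^ 2 * F (f z) := by
  rw [lintegral_image_eq_lintegral_abs_det_fderiv_mul volume hs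
    (fun z hz => (hf z hz).hasFDerivWithinAt.restrictScalars ℝ) hinj]
  refine lintegral_congr fun z => ?_
  congr 1
  have hdet : ((ContinuousLinearMap.toSpanSingleton ℂ (f' z)).restrictScalars ℝ : ℂ →L[ℝ] ℂ).det
      = ‖f' z‖ ^ 2 := by
    simp [ContinuousLinearMap.det, LinearMap.det_restrictScalars,
      Algebra.norm_complex_eq, Complex.normSq_eq_norm_sq]
  rw [hdet, abs_of_nonneg (by positivity), ENNReal.ofReal_pow (norm_nonneg _), ofReal_norm]

end HolomorphicMaps

theorem exists_forall_norm_le_of_forall_norm_tsum_smul_le {ι κ 𝕜 E : Type*} [RCLike 𝕜]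
    [NormedAddCommGroup E] [NormedSpace 𝕜 E] [CompleteSpace E] {b : ι → κ → E}
    (hrow : ∀ i, ∃ K, ∀ n, ‖b i n‖ ≤ K)
    (hsum : ∀ c : κ → 𝕜, Summable (fun n => ‖c n‖) → ∃ C, ∀ i, ‖∑' n, c n • b i n‖ ≤ C) :
    ∃ C, ∀ i n, ‖b i n‖ ≤ C := by
  choose K hK using hrow
  let Λ (i : ι) : lp (fun _ : κ => 𝕜) 1 →L[𝕜] E := (lp.tsumCLM 𝕜 κ E).comp
    (lp.mapCLM 1 (fun n => ContinuousLinearMap.toSpanSingleton 𝕜 (b i n))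
      (abs_nonneg (K i)) fun n => by simpa using (hK i n).trans (le_abs_self _))
  have hΛ (i : ι) (c : lp (fun _ : κ => 𝕜) 1) : Λ i c = ∑' n, c n • b i n := rfl
  obtain ⟨C, hC⟩ := banach_steinhaus (g := Λ) fun c =>
    hsum c (by simpa using (lp.memℓp c).summable (by simp))
  classical
  refine ⟨C, fun i n => ?_⟩
  calc ‖b i n‖ = ‖Λ i (lp.single 1 n 1)‖ := by
        rw [hΛ, tsum_eq_single n fun m hm => by simp [hm]]
        simp
    _ ≤ C := by simpa [lp.norm_single] using (Λ i).le_of_opNorm_le (hC i) (lp.single 1 n 1)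

theorem memLp_tsum {ι X E : Type*} [Countable ι] [MeasurableSpace X] {μ : Measure X}
    [NormedAddCommGroup E] [CompleteSpace E] {p : ℝ≥0∞} (hp : 1 ≤ p) {f : ι → X → E}
    (hf : ∀ n, AEStronglyMeasurable (f n) μ) (hsum : ∑' n, eLpNorm (f n) p μ ≠ ∞) :
    MemLp (fun x => ∑' n, f n x) p μ := by
  have : Fact (1 ≤ p) := ⟨hp⟩
  have hmem (n : ι) : MemLp (f n) p μ :=
    ⟨hf n, (ENNReal.ne_top_of_tsum_ne_top hsum n).lt_top⟩
  have hLp : ∑' n, ‖(hmem n).toLp‖ₑ ≠ ∞ := by simpa [Lp.enorm_toLp] using hsum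
  refine (Lp.memLp (∑' n, (hmem n).toLp)).ae_eq ?_
  filter_upwards [Lp.coeFn_tsum hLp, ae_all_iff.2 fun n => (hmem n).coeFn_toLp] with x hx hcoe
  rw [hx]
  exact tsum_congr hcoe

theorem rpow_le_rpow_abs_mul_rpow {x y K : ℝ} (hx : 0 < x) (hy : 0 < y) (hxy : x ≤ K * y)
    (hyx : y ≤ K * x) (s : ℝ) : x ^ s ≤ K ^ |s| * y ^ s := by
  have hK : 0 < K := pos_of_mul_pos_left (hx.trans_le hxy) hy.le
  obtain hs | hs := le_total 0 s
  · rw [abs_of_nonneg hs, ← Real.mul_rpow hK.le hy.le]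
    exact Real.rpow_le_rpow hx.le hxy hs
  · have hinv := Real.rpow_le_rpow_of_nonpos hy hyx hs
    rw [Real.mul_rpow hK.le hx.le] at hinv
    rw [abs_of_nonpos hs, Real.rpow_neg hK.le]
    rwa [le_inv_mul_iff₀ (by positivity)]

/-- Area measure on the unit disc with density `(1 - |z|)^s`. For `s = p - 2`, the space `B^p`
consists of the holomorphic `f` with `f' ∈ L^p` of this measure; area is not normalized here, since
a constant factor does not affect integrability. -/
noncomputable def weightedArea (s : ℝ) : Measure ℂ :=
  (volume.restrict (ball 0 1)).withDensity fun z => ENNReal.ofReal ((1 - ‖z‖) ^ s)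

theorem lintegral_weightedArea (s : ℝ) (F : ℂ → ℝ≥0∞) :
    ∫⁻ z, F z ∂weightedArea s = ∫⁻ z in ball 0 1, ENNReal.ofReal ((1 - ‖z‖) ^ s) * F z :=
  lintegral_withDensity_eq_lintegral_mul_non_measurable _ (by fun_prop)
    (ae_of_all _ fun _ => ENNReal.ofReal_lt_top) F

theorem ae_weightedArea_mem_ball (s : ℝ) : ∀ᵐ z ∂weightedArea s, z ∈ ball (0 : ℂ) 1 :=
  (withDensity_absolutelyContinuous _ _).ae_le (ae_restrict_mem measurableSet_ball)

theorem isFiniteMeasure_weightedArea {s : ℝ} (hs : -1 < s) : IsFiniteMeasure (weightedArea s) := by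
  refine isFiniteMeasure_withDensity_ofReal (Integrable.hasFiniteIntegral ?_)
  refine (integrableOn_fun_norm_addHaar volume (f := fun r : ℝ => (1 - r) ^ s)).2 ?_
  have hpow : IntervalIntegrable (fun r : ℝ => (1 - r) ^ s) volume 0 1 := by
    simpa using ((intervalIntegral.intervalIntegrable_rpow' (a := 0) (b := 1) hs).comp_sub_left
      1).symm
  have hmul : IntervalIntegrable (fun r : ℝ => r ^ (Module.finrank ℝ ℂ - 1) • (1 - r) ^ s)
      volume 0 1 := hpow.continuousOn_mul (by fun_prop)
  exact ((intervalIntegrable_iff_integrableOn_Ioc_of_le zero_le_one).1 hmul).mono_set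
    Ioo_subset_Ioc_self

theorem mem_besov_iff {p : ℝ} (hp : 0 < p) {f : ℂ → ℂ} :
    f ∈ Besov p ↔ HolOn f ∧ MemLp (deriv f) (ENNReal.ofReal p) (weightedArea (p - 2)) := by
  have hweight : ∀ z ∈ ball (0 : ℂ) 1, ENNReal.ofReal ((1 - ‖z‖) ^ (p - 2) * ‖deriv f z‖ ^ p) =
      ENNReal.ofReal ((1 - ‖z‖) ^ (p - 2)) * ‖deriv f z‖ₑ ^ p := fun z hz => by
    rw [mem_ball_zero_iff] at hz
    rw [ENNReal.ofReal_mul (Real.rpow_nonneg (by linarith) _),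
      ← ENNReal.ofReal_rpow_of_nonneg (norm_nonneg _) hp.le, ofReal_norm]
  have hscale (I : ℝ≥0∞) : (ENNReal.ofReal π)⁻¹ * I < ∞ ↔ I < ∞ := by
    simp [lt_top_iff_ne_top, ENNReal.mul_eq_top, Real.pi_pos]
  rw [Besov, mem_ofPred_eq, setLIntegral_congr_fun measurableSet_ball hweight, dA,
    Measure.restrict_smul, lintegral_smul_measure, ← lintegral_weightedArea, smul_eq_mul, hscale,
    MemLp, eLpNorm_lt_top_iff_lintegral_rpow_enorm_lt_top (by simpa) (by simp),
    ENNReal.toReal_ofReal hp.le]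
  simp only [(measurable_deriv f).aestronglyMeasurable, true_and]

theorem enorm_rpow_le_lintegral_weightedArea {E : Type*} [NormedAddCommGroup E] [NormedSpace ℂ E]
    [CompleteSpace E] {h : ℂ → E} (hh : DifferentiableOn ℂ h (ball 0 1)) {p : ℝ} (hp : 1 ≤ p)
    (s : ℝ) {z : ℂ} (hz : ‖z‖ < 1) :
    ENNReal.ofReal (π * ((1 - ‖z‖) / 2) ^ (s + 2)) * ‖h z‖ₑ ^ p ≤
      ENNReal.ofReal (3 ^ |s|) * ∫⁻ w, ‖h w‖ₑ ^ p ∂weightedArea s := by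
  set R := (1 - ‖z‖) / 2 with hR
  have hR0 : 0 < R := by linarith
  have hnear : ∀ w ∈ ball z R, R ≤ 1 - ‖w‖ ∧ 1 - ‖w‖ ≤ 3 * R := fun w hw => by
    rw [mem_ball_iff_norm] at hw
    have hdist := abs_le.1 (abs_norm_sub_norm_le w z)
    constructor <;> linarith
  have hsub : ball z R ⊆ ball 0 1 := fun w hw => by
    rw [mem_ball_zero_iff]
    linarith [hnear w hw]
  have hvol : ENNReal.ofReal (π * R ^ (s + 2)) =
      ENNReal.ofReal (R ^ s) * volume (ball z R) := by
    rw [Complex.volume_ball, ← ENNReal.ofReal_pow hR0.le, ← NNReal.coe_real_pi,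
      ← ENNReal.ofReal_coe_nnreal, ← ENNReal.ofReal_mul (by positivity),
      ← ENNReal.ofReal_mul (by positivity), Real.rpow_add hR0, Real.rpow_two]
    ring_nf
  calc ENNReal.ofReal (π * R ^ (s + 2)) * ‖h z‖ₑ ^ p
      = ENNReal.ofReal (R ^ s) * (volume (ball z R) * ‖h z‖ₑ ^ p) := by rw [hvol, mul_assoc]
    _ ≤ ENNReal.ofReal (R ^ s) * ∫⁻ w in ball z R, ‖h w‖ₑ ^ p := by
        gcongr
        exact volume_ball_mul_enorm_rpow_le_setLIntegral hp (hh.mono hsub)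
    _ = ∫⁻ w in ball z R, ENNReal.ofReal (R ^ s) * ‖h w‖ₑ ^ p :=
        (lintegral_const_mul' _ _ ENNReal.ofReal_ne_top).symm
    _ ≤ ∫⁻ w in ball z R, ENNReal.ofReal (3 ^ |s|) *
          (ENNReal.ofReal ((1 - ‖w‖) ^ s) * ‖h w‖ₑ ^ p) := by
        refine setLIntegral_mono' measurableSet_ball fun w hw => ?_
        obtain ⟨hRw, hwR⟩ := hnear w hw
        rw [← mul_assoc, ← ENNReal.ofReal_mul (by positivity)]
        gcongr
        exact rpow_le_rpow_abs_mul_rpow hR0 (by linarith) (by linarith) hwR s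
    _ ≤ _ := by
        rw [lintegral_const_mul' _ _ ENNReal.ofReal_ne_top, lintegral_weightedArea]
        gcongr

theorem besov_subset_bloch {p : ℝ} (hp : 1 ≤ p) : Besov p ⊆ Bloch := by
  have hp0 : 0 < p := by linarith
  intro f hf
  obtain ⟨hol, hmem⟩ := (mem_besov_iff hp0).1 hf
  let I := ∫⁻ w, ‖deriv f w‖ₑ ^ p ∂weightedArea (p - 2)
  have hI : I < ∞ := by
    simpa only [ENNReal.toReal_ofReal hp0.le] using
      lintegral_rpow_enorm_lt_top_of_eLpNorm_lt_top (by simpa) ENNReal.ofReal_ne_top hmem.2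
  let A := (ENNReal.ofReal (3 ^ |p - 2|) * I).toReal / π
  refine ⟨hol, 4 * A ^ p⁻¹, fun z hz => ?_⟩
  rw [mem_ball_zero_iff] at hz
  set R := (1 - ‖z‖) / 2 with hR
  have hR0 : 0 < R := by linarith
  have hpoint : π * (R * ‖deriv f z‖) ^ p ≤ (ENNReal.ofReal (3 ^ |p - 2|) * I).toReal := by
    have hle := ENNReal.toReal_mono (ENNReal.mul_lt_top ENNReal.ofReal_lt_top hI).ne
      (enorm_rpow_le_lintegral_weightedArea (hol.deriv isOpen_ball) hp (p - 2) hz)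
    rwa [ENNReal.toReal_mul, ENNReal.toReal_ofReal (by positivity), ← ENNReal.toReal_rpow,
      toReal_enorm, sub_add_cancel, mul_assoc, ← Real.mul_rpow hR0.le (norm_nonneg _)] at hle
  have hroot : R * ‖deriv f z‖ ≤ A ^ p⁻¹ := by
    rw [Real.le_rpow_inv_iff_of_pos (by positivity) (by positivity) hp0]
    exact (le_div_iff₀' Real.pi_pos).2 hpoint
  calc (1 - ‖z‖ ^ 2) * ‖deriv f z‖ ≤ 4 * R * ‖deriv f z‖ := by
        gcongr
        nlinarith [norm_nonneg z]
    _ ≤ 4 * A ^ p⁻¹ := by linarith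

theorem hasDerivAt_tsum_mul {ι : Type*} {f : ι → ℂ → ℂ} {c : ι → ℂ} {B : ℝ}
    (hf : ∀ n, HolOn (f n)) (hB : ∀ n, ∀ z ∈ ball (0 : ℂ) 1, ‖f n z‖ ≤ B)
    (hc : Summable fun n => ‖c n‖) {z : ℂ} (hz : z ∈ ball 0 1) :
    HasDerivAt (fun w => ∑' n, c n * f n w) (∑' n, c n * deriv (f n) z) z := by
  have hu : Summable fun n => ‖c n‖ * B := hc.mul_right B
  have hol : ∀ n, DifferentiableOn ℂ (fun w => c n * f n w) (ball 0 1) := fun n =>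
    (hf n).const_mul (c n)
  have hle : ∀ n, ∀ w ∈ ball (0 : ℂ) 1, ‖c n * f n w‖ ≤ ‖c n‖ * B := fun n w hw => by
    rw [norm_mul]
    exact mul_le_mul_of_nonneg_left (hB n w hw) (norm_nonneg _)
  have hderiv := (Complex.hasSum_deriv_of_summable_norm hu hol isOpen_ball hle hz).tsum_eq
  simp only [deriv_const_mul_field'] at hderiv
  rw [hderiv]
  exact ((differentiableOn_tsum_of_summable_norm hu hol isOpen_ball hle).differentiableAt
    (isOpen_ball.mem_nhds hz)).hasDerivAt

theorem tsum_mul_mem_besov {ι : Type*} [Countable ι] {p : ℝ} (hp : 1 ≤ p) {f : ι → ℂ → ℂ}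
    {c : ι → ℂ} {B : ℝ} {M : ℝ≥0∞} (hf : ∀ n, HolOn (f n))
    (hB : ∀ n, ∀ z ∈ ball (0 : ℂ) 1, ‖f n z‖ ≤ B) (hMtop : M ≠ ∞)
    (hM : ∀ n, eLpNorm (deriv (f n)) (ENNReal.ofReal p) (weightedArea (p - 2)) ≤ M)
    (hc : Summable fun n => ‖c n‖) : (fun z => ∑' n, c n * f n z) ∈ Besov p := by
  have hderiv {z : ℂ} (hz : z ∈ ball 0 1) := hasDerivAt_tsum_mul hf hB hc hz
  refine (mem_besov_iff (by linarith)).2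
    ⟨fun z hz => (hderiv hz).differentiableAt.differentiableWithinAt, ?_⟩
  have hsum : ∑' n, eLpNorm (fun z => c n * deriv (f n) z) (ENNReal.ofReal p)
      (weightedArea (p - 2)) ≠ ∞ := by
    have hcM : ∑' n, ‖c n‖ₑ * M ≠ ∞ := by
      rw [ENNReal.tsum_mul_right]
      exact ENNReal.mul_ne_top (tsum_enorm_ne_top_iff_summable_norm.2 hc) hMtop
    refine ne_top_of_le_ne_top hcM (ENNReal.tsum_le_tsum fun n => ?_)
    exact (eLpNorm_const_smul_le (c := c n) (f := deriv (f n))).trans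
      (mul_le_mul_right (hM n) _)
  refine (memLp_tsum (by simpa) (fun n => ?_) hsum).ae_eq ?_
  · exact ((measurable_deriv (f n)).const_mul (c n)).aestronglyMeasurable
  · filter_upwards [ae_weightedArea_mem_ball (p - 2)] with z hz using (hderiv hz).deriv.symm

section Mobius

open scoped ComplexConjugate

variable {a z : ℂ}

theorem one_sub_conj_mul_ne_zero (ha : ‖a‖ < 1) (hz : ‖z‖ < 1) : 1 - conj a * z ≠ 0 := by
  refine sub_ne_zero.2 fun h => ?_
  have hlt : ‖conj a * z‖ < 1 := by
    rw [norm_mul, RCLike.norm_conj]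
    exact mul_lt_one_of_nonneg_of_lt_one_left (norm_nonneg a) ha hz.le
  simp [← h] at hlt

theorem hasDerivAt_phi (ha : ‖a‖ < 1) (hz : ‖z‖ < 1) :
    HasDerivAt (phi a) ((‖a‖ ^ 2 - 1 : ℝ) / (1 - conj a * z) ^ 2) z := by
  have hnum : HasDerivAt (fun z => a - z) (-1) z := (hasDerivAt_id z).const_sub a
  have hden : HasDerivAt (fun z => 1 - conj a * z) (-conj a) z := by
    simpa using ((hasDerivAt_id z).const_mul (conj a)).const_sub 1
  refine (hnum.fun_div hden (one_sub_conj_mul_ne_zero ha hz)).congr_deriv ?_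
  congr 1
  push_cast
  linear_combination Complex.conj_mul' a

theorem one_sub_norm_phi_sq (ha : ‖a‖ < 1) (hz : ‖z‖ < 1) :
    1 - ‖phi a z‖ ^ 2 = (1 - ‖z‖ ^ 2) * ‖deriv (phi a) z‖ := by
  have hden : 0 < ‖1 - conj a * z‖ := norm_pos_iff.2 (one_sub_conj_mul_ne_zero ha hz)
  rw [(hasDerivAt_phi ha hz).deriv, norm_div, norm_pow, Complex.norm_real, Real.norm_eq_abs,
    abs_of_nonpos (by nlinarith [norm_nonneg a]), phi, norm_div, div_pow,
    one_sub_div (by positivity), ← mul_div_assoc]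
  congr 1
  simp only [← Complex.normSq_eq_norm_sq, Complex.normSq_apply, sub_re, sub_im, one_re, one_im,
    mul_re, mul_im, conj_re, conj_im]
  ring

theorem norm_deriv_phi_pos (ha : ‖a‖ < 1) (hz : ‖z‖ < 1) : 0 < ‖deriv (phi a) z‖ := by
  have hnum : (‖a‖ ^ 2 - 1 : ℝ) ≠ 0 := by nlinarith [norm_nonneg a]
  rw [(hasDerivAt_phi ha hz).deriv, norm_pos_iff]
  exact div_ne_zero (ofReal_ne_zero.2 hnum) (pow_ne_zero 2 (one_sub_conj_mul_ne_zero ha hz))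

theorem norm_phi_lt_one (ha : ‖a‖ < 1) (hz : ‖z‖ < 1) : ‖phi a z‖ < 1 := by
  have hz' : 0 < 1 - ‖z‖ ^ 2 := by nlinarith [norm_nonneg z]
  have hpos := mul_pos hz' (norm_deriv_phi_pos ha hz)
  rw [← one_sub_norm_phi_sq ha hz] at hpos
  nlinarith [norm_nonneg (phi a z)]

theorem holOn_phi (ha : ‖a‖ < 1) : HolOn (phi a) := fun _ hz =>
  (hasDerivAt_phi ha (mem_ball_zero_iff.1 hz)).differentiableAt.differentiableWithinAt

theorem injOn_phi (ha : ‖a‖ < 1) : InjOn (phi a) (ball 0 1) := by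
  intro z hz w hw h
  rw [mem_ball_zero_iff] at hz hw
  rw [phi, phi, div_eq_div_iff (one_sub_conj_mul_ne_zero ha hz)
    (one_sub_conj_mul_ne_zero ha hw)] at h
  have hfactor : (z - w) * (1 - conj a * a) = 0 := by linear_combination -h
  exact sub_eq_zero.1 ((mul_eq_zero.1 hfactor).resolve_right (one_sub_conj_mul_ne_zero ha ha))

theorem weight_mul_norm_deriv_phi_rpow_le (ha : ‖a‖ < 1) (hz : ‖z‖ < 1) (s : ℝ) :
    ((1 - ‖z‖) * ‖deriv (phi a) z‖) ^ s ≤ 2 ^ |s| * (1 - ‖phi a z‖) ^ s := by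
  have hpick := one_sub_norm_phi_sq ha hz
  have hphi := norm_phi_lt_one ha hz
  have hx : 0 < (1 - ‖z‖) * ‖deriv (phi a) z‖ :=
    mul_pos (by linarith) (norm_deriv_phi_pos ha hz)
  refine rpow_le_rpow_abs_mul_rpow hx (by linarith) ?_ ?_ s <;>
    nlinarith [norm_nonneg z, norm_nonneg (phi a z)]

theorem weight_mul_enorm_deriv_phi_rpow_le (ha : ‖a‖ < 1) (hz : ‖z‖ < 1) (p : ℝ) :
    ENNReal.ofReal ((1 - ‖z‖) ^ (p - 2)) * ‖deriv (phi a) z‖ₑ ^ p ≤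
      ENNReal.ofReal (2 ^ |p - 2|) *
        (‖deriv (phi a) z‖ₑ ^ 2 * ENNReal.ofReal ((1 - ‖phi a z‖) ^ (p - 2))) := by
  have hz' : 0 < 1 - ‖z‖ := by linarith
  have hd := norm_deriv_phi_pos ha hz
  rw [← ofReal_norm, ENNReal.ofReal_rpow_of_pos hd, ← ENNReal.ofReal_pow hd.le,
    ← ENNReal.ofReal_mul (by positivity), ← ENNReal.ofReal_mul (by positivity),
    ← ENNReal.ofReal_mul (by positivity)]
  refine ENNReal.ofReal_le_ofReal ?_
  calc (1 - ‖z‖) ^ (p - 2) * ‖deriv (phi a) z‖ ^ p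
      = ((1 - ‖z‖) * ‖deriv (phi a) z‖) ^ (p - 2) * ‖deriv (phi a) z‖ ^ 2 := by
        rw [Real.mul_rpow hz'.le hd.le, mul_assoc, ← Real.rpow_two, ← Real.rpow_add hd,
          sub_add_cancel]
    _ ≤ 2 ^ |p - 2| * (1 - ‖phi a z‖) ^ (p - 2) * ‖deriv (phi a) z‖ ^ 2 := by
        gcongr
        exact weight_mul_norm_deriv_phi_rpow_le ha hz (p - 2)
    _ = 2 ^ |p - 2| * (‖deriv (phi a) z‖ ^ 2 * (1 - ‖phi a z‖) ^ (p - 2)) := by ring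

theorem lintegral_enorm_deriv_phi_rpow_le (ha : ‖a‖ < 1) (p : ℝ) :
    ∫⁻ z, ‖deriv (phi a) z‖ₑ ^ p ∂weightedArea (p - 2) ≤
      ENNReal.ofReal (2 ^ |p - 2|) * weightedArea (p - 2) univ := by
  have hderiv : ∀ z ∈ ball (0 : ℂ) 1, HasDerivWithinAt (phi a) (deriv (phi a) z) (ball 0 1) z :=
    fun z hz => ((holOn_phi ha).hasDerivAt (isOpen_ball.mem_nhds hz)).hasDerivWithinAt
  have himage : phi a '' ball 0 1 ⊆ ball 0 1 := by
    rintro _ ⟨z, hz, rfl⟩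
    rw [mem_ball_zero_iff] at hz ⊢
    exact norm_phi_lt_one ha hz
  rw [lintegral_weightedArea, ← lintegral_one, lintegral_weightedArea]
  simp only [mul_one]
  calc ∫⁻ z in ball 0 1, ENNReal.ofReal ((1 - ‖z‖) ^ (p - 2)) * ‖deriv (phi a) z‖ₑ ^ p
      ≤ ∫⁻ z in ball 0 1, ENNReal.ofReal (2 ^ |p - 2|) *
          (‖deriv (phi a) z‖ₑ ^ 2 * ENNReal.ofReal ((1 - ‖phi a z‖) ^ (p - 2))) :=
        setLIntegral_mono' measurableSet_ball fun z hz =>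
          weight_mul_enorm_deriv_phi_rpow_le ha (mem_ball_zero_iff.1 hz) p
    _ = ENNReal.ofReal (2 ^ |p - 2|) *
          ∫⁻ w in phi a '' ball 0 1, ENNReal.ofReal ((1 - ‖w‖) ^ (p - 2)) := by
        rw [lintegral_image_eq_lintegral_enorm_deriv_sq_mul measurableSet_ball hderiv
          (injOn_phi ha), lintegral_const_mul' _ _ ENNReal.ofReal_ne_top]
    _ ≤ ENNReal.ofReal (2 ^ |p - 2|) *
          ∫⁻ w in ball (0 : ℂ) 1, ENNReal.ofReal ((1 - ‖w‖) ^ (p - 2)) := by gcongr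

end Mobius

theorem exists_forall_eLpNorm_deriv_phi_le {p : ℝ} (hp : 1 < p) :
    ∃ M : ℝ≥0∞, M ≠ ∞ ∧ ∀ a : ℂ, ‖a‖ < 1 →
      eLpNorm (deriv (phi a)) (ENNReal.ofReal p) (weightedArea (p - 2)) ≤ M := by
  have hp0 : 0 < p := by linarith
  have := isFiniteMeasure_weightedArea (s := p - 2) (by linarith)
  refine ⟨(ENNReal.ofReal (2 ^ |p - 2|) * weightedArea (p - 2) univ) ^ (1 / p),
    ENNReal.rpow_ne_top_of_nonneg (by positivity)
      (ENNReal.mul_ne_top ENNReal.ofReal_ne_top (measure_ne_top _ _)), fun a ha => ?_⟩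
  rw [eLpNorm_eq_lintegral_rpow_enorm_toReal (by simpa) ENNReal.ofReal_ne_top,
    ENNReal.toReal_ofReal hp0.le]
  gcongr
  exact lintegral_enorm_deriv_phi_rpow_le ha p

section CompanionOperator

variable {g : ℂ → ℂ}

theorem hasDerivAt_Ig {f : ℂ → ℂ} (hg : HolOn g) (hf : HolOn f) {z : ℂ} (hz : z ∈ ball 0 1) :
    HasDerivAt (Ig g f) (g z * deriv f z) z :=
  hasDerivAt_smul_intervalIntegral (hg.mul (hf.deriv isOpen_ball)) hz

theorem mapsInto_Ig_bloch_bloch (hg : g ∈ Hinf) : MapsInto (Ig g) Bloch Bloch := by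
  rintro f ⟨hf, C, hC⟩
  obtain ⟨hol, K, hK⟩ := hg
  have hderiv {z : ℂ} (hz : z ∈ ball 0 1) := hasDerivAt_Ig hol hf hz
  refine ⟨fun z hz => (hderiv hz).differentiableAt.differentiableWithinAt, K * C, fun z hz => ?_⟩
  rw [(hderiv hz).deriv, norm_mul, mul_left_comm]
  have hz' : 0 ≤ 1 - ‖z‖ ^ 2 := by nlinarith [norm_nonneg z, mem_ball_zero_iff.1 hz]
  exact mul_le_mul (hK z hz) (hC z hz) (by positivity) ((norm_nonneg _).trans (hK z hz))

theorem exists_forall_bloch_tsum_phi_le {ι : Type*} [Countable ι] {p : ℝ} (hp : 1 < p)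
    (hg : HolOn g) (hI : MapsInto (Ig g) (Besov p) Bloch) {a : ι → ℂ} (ha : ∀ n, ‖a n‖ < 1)
    {c : ι → ℂ} (hc : Summable fun n => ‖c n‖) :
    ∃ C, ∀ z ∈ ball (0 : ℂ) 1,
      (1 - ‖z‖ ^ 2) * ‖g z * ∑' n, c n * deriv (phi (a n)) z‖ ≤ C := by
  have hphi (n : ι) : HolOn (phi (a n)) := holOn_phi (ha n)
  have hphi_le (n : ι) (z : ℂ) (hz : z ∈ ball 0 1) : ‖phi (a n) z‖ ≤ 1 :=
    (norm_phi_lt_one (ha n) (mem_ball_zero_iff.1 hz)).le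
  obtain ⟨M, hMtop, hM⟩ := exists_forall_eLpNorm_deriv_phi_le hp
  have hmem : (fun z => ∑' n, c n * phi (a n) z) ∈ Besov p :=
    tsum_mul_mem_besov hp.le hphi hphi_le hMtop (fun n => hM _ (ha n)) hc
  obtain ⟨-, C, hC⟩ := hI _ hmem
  refine ⟨C, fun z hz => ?_⟩
  rw [← (hasDerivAt_tsum_mul hphi hphi_le hc hz).deriv, ← (hasDerivAt_Ig hg hmem.1 hz).deriv]
  exact hC z hz

theorem exists_forall_norm_le_of_mapsInto_Ig {ι : Type*} [Countable ι] {p : ℝ} (hp : 1 < p)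
    (hg : HolOn g) (hI : MapsInto (Ig g) (Besov p) Bloch) {a : ι → ℂ} (ha : ∀ n, ‖a n‖ < 1) :
    ∃ C, ∀ n, ‖g (a n)‖ ≤ C := by
  let b (z : ball (0 : ℂ) 1) (n : ι) : ℂ :=
    (1 - ‖(z : ℂ)‖ ^ 2 : ℝ) * g z * deriv (phi (a n)) z
  have hweight (z : ball (0 : ℂ) 1) : ‖((1 - ‖(z : ℂ)‖ ^ 2 : ℝ) : ℂ)‖ = 1 - ‖(z : ℂ)‖ ^ 2 :=
    Complex.norm_of_nonneg (by nlinarith [norm_nonneg (z : ℂ), mem_ball_zero_iff.1 z.2])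
  have hb (z : ball (0 : ℂ) 1) (n : ι) : ‖b z n‖ = ‖g z‖ * (1 - ‖phi (a n) z‖ ^ 2) := by
    rw [one_sub_norm_phi_sq (ha n) (mem_ball_zero_iff.1 z.2), norm_mul, norm_mul, hweight]
    ring
  have hrow (z : ball (0 : ℂ) 1) : ∃ K, ∀ n, ‖b z n‖ ≤ K := by
    refine ⟨‖g z‖, fun n => ?_⟩
    rw [hb]
    exact mul_le_of_le_one_right (norm_nonneg _) (sub_le_self 1 (sq_nonneg _))
  have hsum (c : ι → ℂ) (hc : Summable fun n => ‖c n‖) :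
      ∃ C, ∀ z, ‖∑' n, c n • b z n‖ ≤ C := by
    obtain ⟨C, hC⟩ := exists_forall_bloch_tsum_phi_le hp hg hI ha hc
    refine ⟨C, fun z => (le_of_eq ?_).trans (hC z z.2)⟩
    simp only [b, smul_eq_mul, mul_left_comm (c _)]
    rw [tsum_mul_left, mul_assoc, norm_mul, hweight]
  obtain ⟨C, hC⟩ := exists_forall_norm_le_of_forall_norm_tsum_smul_le hrow hsum
  refine ⟨C, fun n => ?_⟩
  simpa [hb, phi] using hC ⟨a n, mem_ball_zero_iff.2 (ha n)⟩ n

theorem mem_Hinf_of_mapsInto_Ig {p : ℝ} (hp : 1 < p) (hg : HolOn g)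
    (hI : MapsInto (Ig g) (Besov p) Bloch) : g ∈ Hinf := by
  refine ⟨hg, ?_⟩
  by_contra! hunbounded
  choose a ha hlarge using fun n : ℕ => hunbounded n
  obtain ⟨C, hC⟩ := exists_forall_norm_le_of_mapsInto_Ig hp hg hI fun n =>
    mem_ball_zero_iff.1 (ha n)
  obtain ⟨n, hn⟩ := exists_nat_ge C
  exact (hC n).not_gt (hn.trans_lt (hlarge n))

end CompanionOperator

/-- For `1 < p < ∞` and `g` holomorphic on the unit disc, `I_g` maps `Bᵖ`
into the Bloch space iff `g ∈ H^∞`. -/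
theorem stmt2 (p : ℝ) (hp : 1 < p) (g : ℂ → ℂ) (hg : HolOn g) :
    MapsInto (Ig g) (Besov p) Bloch ↔ g ∈ Hinf :=
  ⟨mem_Hinf_of_mapsInto_Ig hp hg,
    fun hbounded f hf => mapsInto_Ig_bloch_bloch hbounded f (besov_subset_bloch hp.le hf)⟩
end
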